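/- For every n ∈ ℕ and every real β > 1, the Fisher information of the Rakhmanov density of the orthonormal Jacobi polynomial with parameters α = 0 and β equals F[ρ_{n,0,β}] = ((2n+β+1)/4) · [ n²/(β+1) + n + (4n+1)(n+β+1) + (n+1)²/(β−1) ]. -/

import Mathlib

open MeasureTheory Real

/-- The Jacobi polynomial `P_n^{(α,β)}`. -/
noncomputable def jacobiP (α β : ℝ) (n : ℕ) (x : ℝ) : ℝ :=
  ∑ s ∈ Finset.range (n + 1),
    (Real.Gamma ((n : ℝ) + α + 1) / (Real.Gamma (α + (s : ℝ) + 1) * ((n - s).factorial : ℝ))) *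
    (Real.Gamma ((n : ℝ) + β + 1) / (Real.Gamma ((n : ℝ) + β - (s : ℝ) + 1) * (s.factorial : ℝ))) *
    ((x - 1) / 2) ^ s * ((x + 1) / 2) ^ (n - s)

/-- The normalization constant `h_n` of the Jacobi polynomials. -/
noncomputable def jacobih (α β : ℝ) (n : ℕ) : ℝ :=
  2 ^ (α + β + 1) * Real.Gamma ((n : ℝ) + α + 1) * Real.Gamma ((n : ℝ) + β + 1) /
    ((2 * (n : ℝ) + α + β + 1) * (n.factorial : ℝ) * Real.Gamma ((n : ℝ) + α + β + 1))

/-- The Rakhmanov density of the orthonormal Jacobi polynomial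
`p_n^{(α,β)}(x) = h_n^{-1/2} P_n^{(α,β)}(x)`, i.e.
`ρ_{n,α,β}(x) = p_n^{(α,β)}(x)^2 (1-x)^α (1+x)^β`. -/
noncomputable def jacobiρ (α β : ℝ) (n : ℕ) (x : ℝ) : ℝ :=
  (jacobiP α β n x) ^ 2 / jacobih α β n * (1 - x) ^ α * (1 + x) ^ β

open Polynomial

/-- The moment functional `p ↦ ∫₀¹ p(t) t^s dt`. -/
noncomputable def momL (s : ℝ) : ℝ[X] →ₗ[ℝ] ℝ :=
  Polynomial.lsum (fun k => (1 / ((k : ℝ) + s + 1)) • LinearMap.id)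

theorem momL_monomial (s : ℝ) (k : ℕ) (a : ℝ) :
    momL s (monomial k a) = a / ((k : ℝ) + s + 1) := by
  simp [momL, Polynomial.sum_monomial_index]
  ring

theorem momL_X_mul (s : ℝ) (p : ℝ[X]) : momL s (X * p) = momL (s + 1) p := by
  induction p using Polynomial.induction_on' with
  | add p q hp hq => rw [mul_add, map_add, map_add, hp, hq]
  | monomial k a =>
    rw [X_mul_monomial, momL_monomial, momL_monomial]
    push_cast
    ring_nf

theorem momL_X_pow_mul (s : ℝ) (m : ℕ) (p : ℝ[X]) :
    momL s (X ^ m * p) = momL (s + m) p := by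
  induction m generalizing s with
  | zero => simp
  | succ m ih =>
    rw [pow_succ', mul_assoc, momL_X_mul, ih]
    push_cast
    ring_nf

theorem momL_C_mul (s a : ℝ) (p : ℝ[X]) : momL s (C a * p) = a * momL s p := by
  rw [← smul_eq_C_mul, map_smul, smul_eq_mul]

theorem momL_derivative (s : ℝ) (hs : 0 < s) (p : ℝ[X]) :
    momL s (derivative p) = p.eval 1 - s * momL (s - 1) p := by
  induction p using Polynomial.induction_on' with
  | add p q hp hq => rw [derivative_add, map_add, map_add, hp, hq, eval_add]; ring
  | monomial k a =>
    rw [derivative_monomial, momL_monomial, momL_monomial, eval_monomial]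
    rcases k with _ | k
    · simp; field_simp; simp
    · have h1 : ((k : ℝ) + s + 1) ≠ 0 := by positivity
      have h2 : ((k : ℝ) + 1 + (s - 1) + 1) ≠ 0 := by
        have : ((k : ℝ) + 1 + (s - 1) + 1) = k + s + 1 := by ring
        rwa [this]
      push_cast
      field_simp
      simp
      ring

theorem momL_beta (j : ℕ) (s : ℝ) (hs : -1 < s) :
    momL s ((X - C 1) ^ j) * ∏ i ∈ Finset.range (j + 1), (s + 1 + i) = (-1) ^ j * j.factorial := by
  induction j generalizing s with
  | zero =>
    have h : (1 : ℝ[X]) = monomial 0 1 := by simp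
    have h1 : s + 1 ≠ 0 := by linarith
    rw [pow_zero, h, momL_monomial]
    simp
    field_simp
  | succ j ih =>
    have e : ((X - C 1) ^ (j + 1) : ℝ[X]) = X * (X - C 1) ^ j - (X - C 1) ^ j := by
      simp; ring
    have h1 := ih s hs
    have h2 := ih (s + 1) (by linarith)
    have e2 : ∏ i ∈ Finset.range (j + 1), (s + 1 + 1 + (i : ℝ)) =
        ∏ i ∈ Finset.range (j + 1), (s + 1 + ((i + 1 : ℕ) : ℝ)) := by
      apply Finset.prod_congr rfl; intros; push_cast; ring
    rw [e, map_sub, momL_X_mul, sub_mul]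
    rw [Finset.prod_range_succ' _ (j + 1)]
    rw [e2] at h2
    rw [← mul_assoc, h2, ← Finset.prod_range_succ' (fun i : ℕ => (s + 1 + (i : ℝ))),
      Finset.prod_range_succ, ← mul_assoc, h1, Nat.factorial_succ]
    push_cast
    ring

theorem descP_succ (j : ℕ) (x : ℝ) :
    (descPochhammer ℝ (j + 1)).eval x = (descPochhammer ℝ j).eval x * (x - j) :=
  descPochhammer_succ_eval j x

theorem rising_eq (m : ℕ) (s : ℝ) :
    ∏ i ∈ Finset.range m, (s + 1 + (i : ℝ)) = (-1) ^ m * (descPochhammer ℝ m).eval (-s - 1) := by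
  induction m with
  | zero => simp
  | succ m ih => rw [Finset.prod_range_succ, ih, descP_succ]; ring

theorem gamma_desc (j : ℕ) (x : ℝ) (h : (j : ℝ) - 1 < x) :
    Real.Gamma (x + 1) = (descPochhammer ℝ j).eval x * Real.Gamma (x - j + 1) := by
  induction j with
  | zero => simp
  | succ j ih =>
    push_cast at h
    rw [ih (by linarith), descP_succ, Real.Gamma_add_one (s := x - j) (by linarith)]
    push_cast
    ring_nf

theorem desc_eq_prod (n : ℕ) (x : ℝ) :
    (descPochhammer ℝ n).eval (n + x) = ∏ i ∈ Finset.range n, (x + 1 + (i : ℝ)) := by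
  rw [descPochhammer_eval_eq_prod_range, ← Finset.prod_range_reflect]
  apply Finset.prod_congr rfl
  intro i hi
  have : i + 1 ≤ n := Finset.mem_range.mp hi
  rw [Nat.sub_sub, Nat.cast_sub (by omega)]
  push_cast
  ring

theorem vandermonde (n : ℕ) (x y : ℝ) :
    (descPochhammer ℝ n).eval (x + y) = ∑ j ∈ Finset.range (n + 1),
      (n.choose j : ℝ) * ((descPochhammer ℝ j).eval x * (descPochhammer ℝ (n - j)).eval y) := by
  have key := Ring.descPochhammer_smeval_add (r := x) (s := y) n (Commute.all x y)
  rw [Finset.Nat.sum_antidiagonal_eq_sum_range_succ_mk] at key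
  have h : ∀ (k : ℕ) (z : ℝ), (descPochhammer ℤ k).smeval z = (descPochhammer ℝ k).eval z := by
    intro k z
    rw [← descPochhammer_map (algebraMap ℤ ℝ), eval_map_algebraMap, aeval_eq_smeval]
  simp only [h] at key
  simpa [mul_assoc] using key

theorem sub_C_pow_coeff (r : ℝ) (n k : ℕ) :
    ((X - C r) ^ n : ℝ[X]).coeff k = (-r) ^ (n - k) * (n.choose k : ℝ) := by
  rw [sub_eq_add_neg, ← C_neg, coeff_X_add_C_pow]


/-- The Jacobi polynomial `P_n^{(0,β)}(2t-1)` as a polynomial in `t`. -/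
noncomputable def jacQ (n : ℕ) (β : ℝ) : ℝ[X] :=
  ∑ j ∈ Finset.range (n + 1),
    C ((n.choose j : ℝ) * ((descPochhammer ℝ j).eval (n + β) / (j.factorial : ℝ))) *
      (X ^ (n - j) * (X - C 1) ^ j)

theorem jacobiP_eq (n : ℕ) (β : ℝ) (hβ : 1 < β) (x : ℝ) :
    jacobiP 0 β n x = (jacQ n β).eval ((1 + x) / 2) := by
  unfold jacobiP jacQ
  rw [eval_finsetSum]
  apply Finset.sum_congr rfl
  intro j hj
  have hj' : j ≤ n := Nat.lt_succ_iff.mp (Finset.mem_range.mp hj)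
  have hjr : (j : ℝ) ≤ n := by exact_mod_cast hj'
  have h1 : Real.Gamma ((n : ℝ) + β + 1) =
    (descPochhammer ℝ j).eval ((n : ℝ) + β) * Real.Gamma ((n : ℝ) + β - j + 1) :=
    gamma_desc j _ (by linarith)
  have h2 : Real.Gamma ((n : ℝ) + β - j + 1) ≠ 0 := (Real.Gamma_pos_of_pos (by linarith)).ne'
  rw [h1, add_zero, zero_add, Real.Gamma_nat_eq_factorial, Real.Gamma_nat_eq_factorial,
    Nat.cast_choose ℝ hj']
  simp only [eval_mul, eval_C, eval_pow, eval_X, eval_sub]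
  have e1 : (x - 1) / 2 = (1 + x) / 2 - 1 := by ring
  rw [e1, add_comm x 1]
  field_simp

theorem momL_jacQ (n : ℕ) (β s : ℝ) (hs : -1 < s) :
    momL s (jacQ n β) * ∏ i ∈ Finset.range (n + 1), (s + 1 + (i : ℝ)) =
      (-1) ^ n * (descPochhammer ℝ n).eval (n + β + (-s - 1)) := by
  unfold jacQ
  rw [map_sum, Finset.sum_mul, vandermonde, Finset.mul_sum]
  apply Finset.sum_congr rfl
  intro j hj
  have hj' : j ≤ n := Nat.lt_succ_iff.mp (Finset.mem_range.mp hj)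
  rw [momL_C_mul, momL_X_pow_mul]
  have hb := momL_beta j (s + ((n - j : ℕ) : ℝ)) (by have : (0 : ℝ) ≤ ((n - j : ℕ) : ℝ) := Nat.cast_nonneg _; linarith)
  have hr := rising_eq (n - j) s
  have e : n + 1 = (n - j) + (j + 1) := by omega
  have e2 : ∏ i ∈ Finset.range (j + 1), (s + 1 + ((n - j + i : ℕ) : ℝ)) =
      ∏ i ∈ Finset.range (j + 1), (s + ((n - j : ℕ) : ℝ) + 1 + (i : ℝ)) := by
    apply Finset.prod_congr rfl; intros; push_cast; ring
  have hf : (j.factorial : ℝ) ≠ 0 := by positivity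
  rw [e, Finset.prod_range_add, hr, e2]
  have e3 : ((-1 : ℝ)) ^ n = (-1) ^ (n - j) * (-1) ^ j := by rw [← pow_add]; congr 1; omega
  rw [e3]
  generalize (momL (s + ((n - j : ℕ) : ℝ))) ((X - C 1) ^ j) = m at *
  generalize ∏ i ∈ Finset.range (j + 1), (s + ((n - j : ℕ) : ℝ) + 1 + (i : ℝ)) = P at *
  generalize (descPochhammer ℝ (n - j)).eval (-s - 1) = D
  calc _ = (n.choose j : ℝ) * ((descPochhammer ℝ j).eval (n + β) / (j.factorial : ℝ)) *
        ((-1) ^ (n - j) * D) * (m * P) := by ring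
    _ = _ := by rw [hb]; field_simp

theorem jacQ_orth_pow (n : ℕ) (β : ℝ) (hβ : 1 < β) (k : ℕ) (hk : k < n) :
    momL (β + k) (jacQ n β) = 0 := by
  have hk0 : (0 : ℝ) ≤ k := Nat.cast_nonneg k
  have h := momL_jacQ n β (β + k) (by linarith)
  have e : (n : ℝ) + β + (-(β + k) - 1) = ((n - 1 - k : ℕ) : ℝ) := by
    rw [Nat.sub_sub, Nat.cast_sub (by omega)]; push_cast; ring
  rw [e, descPochhammer_eval_coe_nat_of_lt (by omega), mul_zero] at h
  rcases mul_eq_zero.mp h with h | h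
  · exact h
  · exfalso
    have : 0 < ∏ i ∈ Finset.range (n + 1), (β + k + 1 + (i : ℝ)) :=
      Finset.prod_pos (fun i _ => by positivity)
    linarith

theorem jacQ_orth (n : ℕ) (β : ℝ) (hβ : 1 < β) (p : ℝ[X]) (hp : ∀ k, n ≤ k → p.coeff k = 0) :
    momL β (p * jacQ n β) = 0 := by
  rw [p.as_sum_support_C_mul_X_pow, Finset.sum_mul, map_sum]
  apply Finset.sum_eq_zero
  intro k hk
  rw [mul_assoc, momL_C_mul, momL_X_pow_mul, jacQ_orth_pow n β hβ k, mul_zero]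
  by_contra hc
  exact (mem_support_iff.mp hk) (hp k (by omega))

theorem jacQ_coeff (n : ℕ) (β : ℝ) (k : ℕ) (hk : n < k) : (jacQ n β).coeff k = 0 := by
  apply coeff_eq_zero_of_natDegree_lt
  refine lt_of_le_of_lt ?_ hk
  unfold jacQ
  apply natDegree_sum_le_of_forall_le
  intro j hj
  have hj' : j ≤ n := Nat.lt_succ_iff.mp (Finset.mem_range.mp hj)
  refine (natDegree_C_mul_le _ _).trans (natDegree_mul_le.trans ?_)
  rw [natDegree_X_pow, natDegree_pow, natDegree_X_sub_C]
  omega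

theorem jacQ_eval_one (n : ℕ) (β : ℝ) : (jacQ n β).eval 1 = 1 := by
  unfold jacQ
  rw [eval_finsetSum, Finset.sum_range_succ']
  simp

theorem jacQ_deriv_eval_one (n : ℕ) (β : ℝ) :
    (derivative (jacQ n β)).eval 1 = n * (n + β + 1) := by
  unfold jacQ
  rcases n with _ | n
  · simp
  · rw [derivative_sum, eval_finsetSum, Finset.sum_range_succ', Finset.sum_range_succ']
    simp [derivative_mul, derivative_pow]
    ring

theorem jacQ_coeff_zero (n : ℕ) (β : ℝ) :
    (jacQ n β).coeff 0 = (-1) ^ n * (descPochhammer ℝ n).eval (n + β) / n.factorial := by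
  unfold jacQ
  rw [finsetSum_coeff, Finset.sum_range_succ, Finset.sum_eq_zero]
  · simp [coeff_zero_eq_eval_zero]
    ring
  · intro j hj
    have hj' : j < n := (Finset.mem_range.mp hj)
    have : n - j ≠ 0 := by omega
    simp [coeff_zero_eq_eval_zero, this]

theorem jacQ_coeff_one (n : ℕ) (β : ℝ) (hβ : 1 < β) :
    (jacQ n β).coeff 1 = - (n * (n + β + 1) / (β + 1)) * (jacQ n β).coeff 0 := by
  rcases n with _ | n
  · rw [jacQ_coeff _ _ _ (by norm_num)]; simp
  rw [jacQ_coeff_zero]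
  unfold jacQ
  rw [finsetSum_coeff, Finset.sum_range_succ, Finset.sum_range_succ, Finset.sum_eq_zero]
  · have e : n + 1 - n = 1 := by omega
    have hb : β + 1 ≠ 0 := by linarith
    rw [e, Nat.sub_self, pow_zero, one_mul, coeff_C_mul, coeff_C_mul, sub_C_pow_coeff,
      pow_one, coeff_X_mul, sub_C_pow_coeff, descP_succ, Nat.factorial_succ]
    simp
    field_simp
    ring
  · intro j hj
    have hj' : j < n := (Finset.mem_range.mp hj)
    obtain ⟨m, hm⟩ : ∃ m, n + 1 - j = m + 2 := ⟨n - 1 - j, by omega⟩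
    rw [coeff_C_mul, hm, pow_succ', pow_succ', mul_assoc, mul_assoc, coeff_X_mul]
    simp

theorem jacQ_V (n : ℕ) (β : ℝ) (hβ : 1 < β) :
    momL (β - 2) (jacQ n β * jacQ n β) =
      (n + 1) * (β + n) / ((β - 1) * β) - n * (n + β + 1) / ((β + 1) * β) := by
  set Q := jacQ n β with hQ
  have hdec : Q * Q = C (Q.coeff 0) * Q + X * (C (Q.coeff 1) * Q) +
      X ^ 2 * (divX (divX Q) * Q) := by
    have h1 := divX_mul_X_add Q
    have h2 := divX_mul_X_add (divX Q)
    rw [coeff_divX] at h2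
    linear_combination (- Q) * h1 - X * Q * h2
  have horth : momL β (divX (divX Q) * Q) = 0 := by
    apply jacQ_orth n β hβ
    intro k hk
    rw [coeff_divX, coeff_divX]
    exact jacQ_coeff n β _ (by omega)
  have hb0 : (0 : ℝ) < ∏ i ∈ Finset.range n, (β + 1 + (i : ℝ)) :=
    Finset.prod_pos (fun i _ => by positivity)
  have e1 : ∏ i ∈ Finset.range (n + 1), (β - 1 + 1 + (i : ℝ)) =
      (∏ i ∈ Finset.range n, (β + 1 + (i : ℝ))) * β := by
    rw [Finset.prod_range_succ']
    congr 1
    · apply Finset.prod_congr rfl; intros; push_cast; ring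
    · simp
  have e2 : (∏ i ∈ Finset.range (n + 1), (β - 2 + 1 + (i : ℝ))) * (β + n) =
      (∏ i ∈ Finset.range n, (β + 1 + (i : ℝ))) * β * (β - 1) := by
    have : (∏ i ∈ Finset.range (n + 1), (β - 2 + 1 + (i : ℝ))) * (β + n) =
        ∏ i ∈ Finset.range (n + 2), (β - 2 + 1 + (i : ℝ)) := by
      rw [Finset.prod_range_succ _ (n + 1)]; push_cast; ring
    rw [this, Finset.prod_range_succ', ← e1]
    congr 1
    · apply Finset.prod_congr rfl; intros; push_cast; ring
    · push_cast; ring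
  have hL1 := momL_jacQ n β (β - 1) (by linarith)
  have hL2 := momL_jacQ n β (β - 2) (by linarith)
  rw [show (n : ℝ) + β + (-(β - 1) - 1) = (n : ℝ) by ring,
    descPochhammer_eval_eq_descFactorial, Nat.descFactorial_self, e1] at hL1
  rw [show (n : ℝ) + β + (-(β - 2) - 1) = ((n + 1 : ℕ) : ℝ) by push_cast; ring,
    descPochhammer_eval_eq_descFactorial] at hL2
  have hdf : (n + 1).descFactorial n = (n + 1).factorial := by
    have := Nat.factorial_mul_descFactorial (n := n + 1) (k := n) (by omega)
    simpa using this
  rw [hdf, Nat.factorial_succ] at hL2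
  have hq0 := jacQ_coeff_zero n β
  rw [desc_eq_prod] at hq0
  have hq1 := jacQ_coeff_one n β hβ
  rw [← hQ] at hL1 hL2 hq0 hq1
  rw [hdec, map_add, map_add, momL_C_mul, momL_X_mul, momL_C_mul, momL_X_pow_mul]
  rw [show β - 2 + ((2 : ℕ) : ℝ) = β by push_cast; ring, horth,
    show β - 2 + 1 = β - 1 by ring, hq1, hq0]
  have hsq : ((-1 : ℝ) ^ n) * (-1) ^ n = 1 := by rw [← mul_pow]; simp
  have hf : (n.factorial : ℝ) ≠ 0 := by positivity
  have hbn : β + n ≠ 0 := by positivity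
  generalize ∏ i ∈ Finset.range n, (β + 1 + (i : ℝ)) = P at *
  generalize ∏ i ∈ Finset.range (n + 1), (β - 2 + 1 + (i : ℝ)) = P2 at *
  have hb1 : β - 1 ≠ 0 := by linarith
  have hb2 : β ≠ 0 := by linarith
  have hb3 : β + 1 ≠ 0 := by linarith
  have hP := hb0.ne'
  have h1 : momL (β - 1) Q = (-1) ^ n * n.factorial / (P * β) := by
    rw [eq_div_iff (by positivity)]; exact hL1
  have h2 : momL (β - 2) Q = (-1) ^ n * ((n + 1) * n.factorial) * (β + n) / (P * β * (β - 1)) := by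
    rw [eq_div_iff (by simp [hb1, hb2, hP]), ← e2, ← mul_assoc, hL2]; push_cast; ring
  rw [h1, h2]
  field_simp
  rw [show ((-1 : ℝ) ^ n) ^ 2 = 1 by rw [sq, hsq]]
  ring

theorem jacQ_total (n : ℕ) (β : ℝ) (hβ : 1 < β) :
    momL (β - 2) ((2 * X * derivative (jacQ n β) + C β * jacQ n β) ^ 2) =
      (n : ℝ) ^ 2 / (β + 1) + (n : ℝ) + (4 * (n : ℝ) + 1) * ((n : ℝ) + β + 1) +
          ((n : ℝ) + 1) ^ 2 / (β - 1) := by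
  set Q := jacQ n β with hQ
  have horth : momL β (derivative (derivative Q) * Q) = 0 := by
    apply jacQ_orth n β hβ
    intro k hk
    rw [coeff_derivative, coeff_derivative, jacQ_coeff n β _ (by omega)]
    simp
  have hd := momL_derivative β (by linarith) (derivative Q * Q)
  rw [derivative_mul, map_add, horth, eval_mul, jacQ_eval_one, jacQ_deriv_eval_one] at hd
  have e : (2 * X * derivative Q + C β * Q) ^ 2 =
      X ^ 2 * (C 4 * (derivative Q * derivative Q)) + X * (C (4 * β) * (derivative Q * Q)) +
        C (β ^ 2) * (Q * Q) := by
    have : (C 4 : ℝ[X]) = 4 := rfl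
    rw [C_mul, C_pow, this]
    ring
  rw [e, map_add, map_add, momL_X_pow_mul, momL_X_mul, momL_C_mul, momL_C_mul, momL_C_mul, jacQ_V n β hβ]
  rw [show β - 2 + ((2 : ℕ) : ℝ) = β by push_cast; ring, show β - 2 + 1 = β - 1 by ring]
  have hb1 : β - 1 ≠ 0 := by linarith
  have hb2 : β ≠ 0 := by linarith
  have hb3 : β + 1 ≠ 0 := by linarith
  have hd' : momL β (derivative Q * derivative Q) =
    n * (n + β + 1) - β * momL (β - 1) (derivative Q * Q) := by linarith
  rw [hd']
  field_simp
  ring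

theorem integral_momL (s : ℝ) (hs : -1 < s) (p : ℝ[X]) :
    ∫ x in Set.Ioo (-1 : ℝ) 1, p.eval ((1 + x) / 2) * ((1 + x) / 2) ^ s = 2 * momL s p := by
  rw [← MeasureTheory.integral_Ioc_eq_integral_Ioo,
    ← intervalIntegral.integral_of_le (by norm_num)]
  have h := intervalIntegral.integral_comp_add_div (a := (-1 : ℝ)) (b := 1)
    (fun t : ℝ => p.eval t * t ^ s) (c := 2) (by norm_num) (1 / 2)
  have e : ∀ x : ℝ, (1 : ℝ) / 2 + x / 2 = (1 + x) / 2 := by intro x; ring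
  simp only [e] at h
  rw [h]
  norm_num
  have key : ∀ q : ℝ[X], IntervalIntegrable (fun t : ℝ => q.eval t * t ^ s) volume 0 1 ∧
      ∫ t in (0 : ℝ)..1, q.eval t * t ^ s = momL s q := by
    intro q
    induction q using Polynomial.induction_on' with
    | add p q hp hq =>
      simp only [eval_add, add_mul, map_add]
      exact ⟨hp.1.add hq.1, by rw [intervalIntegral.integral_add hp.1 hq.1, hp.2, hq.2]⟩
    | monomial k a =>
      have hks : -1 < (k : ℝ) + s := by
        have : (0 : ℝ) ≤ k := Nat.cast_nonneg k
        linarith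
      have hEq : Set.EqOn (fun t : ℝ => a * t ^ ((k : ℝ) + s))
          (fun t => (monomial k a).eval t * t ^ s) (Set.uIoc 0 1) := by
        intro t ht
        rw [Set.uIoc_of_le (by norm_num)] at ht
        simp only [eval_monomial]
        rw [Real.rpow_add ht.1, Real.rpow_natCast]
        ring
      constructor
      · exact ((intervalIntegral.intervalIntegrable_rpow' hks).const_mul a).congr hEq
      · rw [momL_monomial, ← intervalIntegral.integral_congr_ae (Filter.Eventually.of_forall hEq),
          intervalIntegral.integral_const_mul, integral_rpow (Or.inl hks)]
        have : (k : ℝ) + s + 1 ≠ 0 := by linarith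
        simp [Real.zero_rpow this]
        ring
  exact (key p).2

theorem jacobih_eq (n : ℕ) (β : ℝ) (hβ : 1 < β) :
    jacobih 0 β n = 2 ^ (β + 1) / (2 * n + β + 1) := by
  have h0 : (0 : ℝ) ≤ n := Nat.cast_nonneg n
  have h2 : Real.Gamma ((n : ℝ) + β + 1) ≠ 0 := (Real.Gamma_pos_of_pos (by linarith)).ne'
  have h3 : (2 * (n : ℝ) + β + 1) ≠ 0 := by linarith
  have h4 : (n.factorial : ℝ) ≠ 0 := by positivity
  unfold jacobih
  simp only [add_zero, zero_add, Real.Gamma_nat_eq_factorial]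
  field_simp

theorem jacobi_integrand (n : ℕ) (β : ℝ) (hβ : 1 < β) (x : ℝ) (hx : -1 < x)
    (hq : (jacQ n β).eval ((1 + x) / 2) ≠ 0) :
    (deriv (jacobiρ 0 β n) x) ^ 2 / jacobiρ 0 β n x =
      (2 * (n : ℝ) + β + 1) / 8 *
        (((2 * X * derivative (jacQ n β) + C β * jacQ n β) ^ 2).eval ((1 + x) / 2) *
          ((1 + x) / 2) ^ (β - 2)) := by
  have h0 : (0 : ℝ) ≤ n := Nat.cast_nonneg n
  have hN : (2 * (n : ℝ) + β + 1) ≠ 0 := by linarith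
  have hx1 : 0 < 1 + x := by linarith
  have hρ : jacobiρ 0 β n = fun x => (2 * (n : ℝ) + β + 1) / 2 ^ (β + 1) *
      ((jacQ n β).eval ((1 + x) / 2) ^ 2 * (1 + x) ^ β) := by
    funext y
    unfold jacobiρ
    rw [jacobiP_eq n β hβ, jacobih_eq n β hβ, Real.rpow_zero]
    field_simp
  have hlin : HasDerivAt (fun x : ℝ => 1 + x) 1 x := (hasDerivAt_id x).const_add 1
  have hQd : HasDerivAt (fun x : ℝ => (jacQ n β).eval ((1 + x) / 2))
      ((derivative (jacQ n β)).eval ((1 + x) / 2) * (1 / 2)) x :=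
    HasDerivAt.comp x (h₂ := fun t : ℝ => (jacQ n β).eval t)
      ((jacQ n β).hasDerivAt ((1 + x) / 2)) (hlin.div_const 2)
  have hw : HasDerivAt (fun x : ℝ => (1 + x) ^ β) (1 * β * (1 + x) ^ (β - 1)) x :=
    hlin.rpow_const (Or.inl hx1.ne')
  have hd := ((hQd.pow 2).mul hw).const_mul ((2 * (n : ℝ) + β + 1) / 2 ^ (β + 1))
  have hd2 := HasDerivAt.congr_of_eventuallyEq (f₁ := jacobiρ 0 β n) hd
    (Filter.Eventually.of_forall (fun y => congrFun hρ y))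
  rw [hd2.deriv, hρ]
  simp only [eval_pow, eval_add, eval_mul, eval_X, eval_C, eval_ofNat, Pi.pow_apply]
  rw [Real.div_rpow hx1.le (by norm_num), Real.rpow_sub hx1, Real.rpow_sub hx1,
    Real.rpow_sub (by norm_num : (0 : ℝ) < 2), Real.rpow_add (by norm_num : (0 : ℝ) < 2),
    Real.rpow_one, Real.rpow_one, Real.rpow_two, Real.rpow_two]
  have hw0 : (1 + x) ^ β ≠ 0 := (Real.rpow_pos_of_pos hx1 β).ne'
  have h20 : (2 : ℝ) ^ β ≠ 0 := (Real.rpow_pos_of_pos (by norm_num) β).ne'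
  generalize (1 + x) ^ β = w at *
  generalize (2 : ℝ) ^ β = z at *
  generalize (jacQ n β).eval ((1 + x) / 2) = q at *
  generalize (derivative (jacQ n β)).eval ((1 + x) / 2) = q' at *
  have hx2 := hx1.ne'
  push_cast
  field_simp
  ring

/-- For every `n ∈ ℕ` and real `β > 1`, the Fisher information of the
Rakhmanov density of the orthonormal Jacobi polynomial with `α = 0` equals
`((2n+β+1)/4)·[n²/(β+1) + n + (4n+1)(n+β+1) + (n+1)²/(β−1)]`. -/
theorem jacobi_fisher_alpha_zero (n : ℕ) (β : ℝ) (hβ : 1 < β) :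
    (∫ x in Set.Ioo (-1 : ℝ) 1, (deriv (jacobiρ 0 β n) x) ^ 2 / jacobiρ 0 β n x) =
      (2 * (n : ℝ) + β + 1) / 4 *
        ((n : ℝ) ^ 2 / (β + 1) + (n : ℝ) + (4 * (n : ℝ) + 1) * ((n : ℝ) + β + 1) +
          ((n : ℝ) + 1) ^ 2 / (β - 1)) := by

  have hQ0 : jacQ n β ≠ 0 := by
    intro h
    have := jacQ_eval_one n β
    rw [h] at this
    simp at this
  have hfin : {x : ℝ | (jacQ n β).eval ((1 + x) / 2) = 0}.Finite := by
    have h1 : {t : ℝ | (jacQ n β).eval t = 0}.Finite := by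
      refine ((jacQ n β).roots.toFinset.finite_toSet).subset ?_
      intro t ht
      simpa [hQ0] using ht
    refine h1.preimage (f := fun x : ℝ => (1 + x) / 2) ?_
    intro a _ b _ hab
    simp only at hab
    linarith
  have hae : ∀ᵐ x : ℝ, (jacQ n β).eval ((1 + x) / 2) ≠ 0 := by
    rw [ae_iff]
    simpa using hfin.measure_zero volume
  have hcongr : (∫ x in Set.Ioo (-1 : ℝ) 1, (deriv (jacobiρ 0 β n) x) ^ 2 / jacobiρ 0 β n x) =
      ∫ x in Set.Ioo (-1 : ℝ) 1, (2 * (n : ℝ) + β + 1) / 8 *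
        (((2 * X * derivative (jacQ n β) + C β * jacQ n β) ^ 2).eval ((1 + x) / 2) *
          ((1 + x) / 2) ^ (β - 2)) := by
    apply setIntegral_congr_ae measurableSet_Ioo
    filter_upwards [hae] with x hx hx'
    exact jacobi_integrand n β hβ x hx'.1 hx
  rw [hcongr, integral_const_mul, integral_momL _ (by linarith), jacQ_total n β hβ]
  ring
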